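/- arXiv:1103.4674 — 2 statements merged into one kernel-verified Lean document; each statement's English description precedes it below -/
import Mathlib

section
/- For all real numbers x, y, z one has the integral representation R(x, y, z) = (1/2)·∫₀ˣ (H(z, s+y) + H(z, s−y)) ds. -/
open Real

/-- Mirzakhani's kernel H(x, y). -/
noncomputable def H (x y : ℝ) : ℝ :=
  1 / (1 + Real.exp ((x + y) / 2)) + 1 / (1 + Real.exp ((x - y) / 2))

/-- The function R(x, y, z) from the generalised McShane identity. -/
noncomputable def R (x y z : ℝ) : ℝ :=
  x - Real.log ((Real.cosh (y / 2) + Real.cosh ((x + z) / 2)) /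
      (Real.cosh (y / 2) + Real.cosh ((x - z) / 2)))

/-!
Differentiate `R x y z` in `x`. The closed form `H x y = 1 - sinh (x/2) / (cosh (y/2) + cosh (x/2))`
exhibits `(1 - H x y) / 2` as the logarithmic derivative of `x ↦ cosh (y/2) + cosh (x/2)`, so
`∂R/∂x = 1 + (H (x + z) y - H (x - z) y) / 2`. The reflection `H (-x) y = 2 - H x y` and a
regrouping of the four Fermi factors `1 / (1 + exp (u/2))` turn this into the integrand. Since
`R 0 y z = 0`, the fundamental theorem of calculus concludes.
-/

lemma cosh_add_cosh_pos (a b : ℝ) : 0 < cosh a + cosh b :=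
  add_pos (cosh_pos a) (cosh_pos b)

lemma one_add_exp_add_mul_one_add_exp_sub (a b : ℝ) :
    (1 + exp (a + b)) * (1 + exp (a - b)) = 2 * exp a * (cosh b + cosh a) := by
  have ha : exp a * exp (-a) = 1 := by rw [← exp_add, add_neg_cancel, exp_zero]
  have hb : exp b * exp (-b) = 1 := by rw [← exp_add, add_neg_cancel, exp_zero]
  rw [sub_eq_add_neg, exp_add, exp_add, cosh_eq, cosh_eq]
  linear_combination exp a ^ 2 * hb - ha

lemma one_div_one_add_exp_add_add_one_div_one_add_exp_sub (a b : ℝ) :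
    1 / (1 + exp (a + b)) + 1 / (1 + exp (a - b)) = 1 - sinh a / (cosh b + cosh a) := by
  have hsum : 2 + exp (a + b) + exp (a - b) = 2 * exp a * (exp (-a) + cosh b) := by
    rw [cosh_eq, sub_eq_add_neg, exp_add, exp_add, exp_neg a]
    field_simp
    ring
  calc 1 / (1 + exp (a + b)) + 1 / (1 + exp (a - b))
      = (2 + exp (a + b) + exp (a - b)) / ((1 + exp (a + b)) * (1 + exp (a - b))) := by
        field_simp
        ring
    _ = (exp (-a) + cosh b) / (cosh b + cosh a) := by
        rw [hsum, one_add_exp_add_mul_one_add_exp_sub,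
          mul_div_mul_left _ _ (mul_pos two_pos (exp_pos a)).ne']
    _ = 1 - sinh a / (cosh b + cosh a) := by
        rw [one_sub_div (cosh_add_cosh_pos b a).ne', ← cosh_sub_sinh]
        ring

lemma H_eq_one_sub_sinh_div (x y : ℝ) :
    H x y = 1 - sinh (x / 2) / (cosh (y / 2) + cosh (x / 2)) := by
  rw [H, add_div, sub_div, one_div_one_add_exp_add_add_one_div_one_add_exp_sub]

lemma H_neg_left (x y : ℝ) : H (-x) y = 2 - H x y := by
  simp only [H_eq_one_sub_sinh_div, neg_div, sinh_neg, cosh_neg]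
  ring

lemma H_add_right_add_H_sub_right (z s y : ℝ) :
    H z (s + y) + H z (s - y) = H (z + s) y + H (z - s) y := by
  unfold H
  ring_nf

lemma continuous_uncurry_H : Continuous (Function.uncurry H) := by
  simp only [Function.uncurry_def, H_eq_one_sub_sinh_div]
  fun_prop (disch := exact fun _ ↦ (cosh_add_cosh_pos _ _).ne')

lemma hasDerivAt_log_cosh_add_cosh (x y : ℝ) :
    HasDerivAt (fun t ↦ log (cosh (y / 2) + cosh (t / 2))) ((1 - H x y) / 2) x := by
  have hcosh := (((hasDerivAt_id x).div_const 2).cosh.const_add (cosh (y / 2))).log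
    (cosh_add_cosh_pos _ _).ne'
  refine hcosh.congr_deriv ?_
  rw [H_eq_one_sub_sinh_div, id]
  ring

lemma R_eq_sub_log_sub_log (x y z : ℝ) :
    R x y z = x - (log (cosh (y / 2) + cosh ((x + z) / 2)) -
      log (cosh (y / 2) + cosh ((x - z) / 2))) := by
  rw [R, log_div (cosh_add_cosh_pos _ _).ne' (cosh_add_cosh_pos _ _).ne']

lemma R_zero_left (y z : ℝ) : R 0 y z = 0 := by
  simp [R_eq_sub_log_sub_log, neg_div]

lemma hasDerivAt_R (x y z : ℝ) :
    HasDerivAt (fun t ↦ R t y z) (1 / 2 * (H z (x + y) + H z (x - y))) x := by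
  have hlog_add := (hasDerivAt_log_cosh_add_cosh (x + z) y).comp_add_const x z
  have hlog_sub := (hasDerivAt_log_cosh_add_cosh (x - z) y).comp_sub_const x z
  have hderiv : 1 - ((1 - H (x + z) y) / 2 - (1 - H (x - z) y) / 2) =
      1 / 2 * (H z (x + y) + H z (x - y)) := by
    rw [H_add_right_add_H_sub_right, add_comm z x, ← neg_sub x z, H_neg_left]
    ring
  simp only [R_eq_sub_log_sub_log]
  exact ((hasDerivAt_id x).sub (hlog_add.sub hlog_sub)).congr_deriv hderiv

theorem R_eq_integral (x y z : ℝ) :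
    R x y z = (1 / 2) * ∫ s in (0 : ℝ)..x, (H z (s + y) + H z (s - y)) := by
  have hcont : Continuous fun s ↦ 1 / 2 * (H z (s + y) + H z (s - y)) :=
    continuous_const.mul <|
      (continuous_uncurry_H.comp (by fun_prop : Continuous fun s ↦ (z, s + y))).add
        (continuous_uncurry_H.comp (by fun_prop : Continuous fun s ↦ (z, s - y)))
  rw [← intervalIntegral.integral_const_mul,
    intervalIntegral.integral_eq_sub_of_hasDerivAt (fun s _ ↦ hasDerivAt_R s y z)
      (hcont.intervalIntegrable 0 x),
    R_zero_left, sub_zero]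
end

section
/- For every real number t, the function x ↦ x³·H(x, t) is integrable on (0, ∞) and ∫₀^∞ x³ H(x, t) dx = t⁴/4 + 2π²t² + 28π⁴/15. -/
open Real MeasureTheory

/-!
The kernel is `H x t = φ (x + t) + φ (x - t)`, where `φ u = sigmoid (-(u / 2))` satisfies the
reflection law `φ (-u) = 1 - φ u`. Translating each summand so that `φ` is evaluated at the variable
of integration moves the lower limits of integration to `t` and `-t`. For an odd weight `f`, the
reflection law makes the integrals over `[0, t]` and `[-t, 0]` collapse to `∫₀ᵗ f`, and what is left
is the integral of `(f (u + t) + f (u - t)) φ u` over `(0, ∞)`. For `f = x ^ (2 * k + 1)` this is a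
combination of odd moments of `φ`. Expanding `φ` as a geometric series in `exp (-u / 2)`, such a
moment is an alternating sum `∑ (-1) ^ n / (n + 1) ^ (2 * j + 2)`, which the Fourier series of the
Bernoulli polynomials evaluates at `1 / 2`.
-/

open Set (Ioi)
open Finset (range sum_add_distrib sum_congr sum_mul sum_range_succ)

section Translation

variable {E : Type*} [NormedAddCommGroup E] {g : ℝ → E}

lemma integrableOn_Ioi_comp_add_right_iff (a t : ℝ) :
    IntegrableOn (fun x ↦ g (x + t)) (Ioi a) ↔ IntegrableOn g (Ioi (a + t)) := by
  simpa [Function.comp_def] using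
    (measurePreserving_add_right volume t).integrableOn_comp_preimage
      (measurableEmbedding_addRight t) (f := g) (s := Ioi (a + t))

lemma integral_Ioi_comp_add_right [NormedSpace ℝ E] (g : ℝ → E) (a t : ℝ) :
    ∫ x in Ioi a, g (x + t) = ∫ x in Ioi (a + t), g x := by
  simpa using (measurePreserving_add_right volume t).setIntegral_preimage_emb
    (measurableEmbedding_addRight t) g (Ioi (a + t))

lemma integrableOn_Ioi_of_continuous {a : ℝ} (hg : Continuous g) (h : IntegrableOn g (Ioi a))
    (b : ℝ) : IntegrableOn g (Ioi b) :=
  ((hg.integrableOn_Icc (a := b) (b := a)).union h).mono_set fun x (hx : b < x) ↦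
    (le_or_gt x a).imp (fun hxa ↦ ⟨hx.le, hxa⟩) id

lemma integral_Ioi_comp_add_right_eq_sub [NormedSpace ℝ E] {a : ℝ} (hg : Continuous g)
    (h : IntegrableOn g (Ioi a)) (t : ℝ) :
    ∫ x in Ioi a, g (x + t) = (∫ x in Ioi a, g x) - ∫ x in a..(a + t), g x := by
  rw [integral_Ioi_comp_add_right, eq_sub_iff_add_eq',
    intervalIntegral.integral_interval_add_Ioi h (integrableOn_Ioi_of_continuous hg h _)]

end Translation

section Reflection

variable {f φ : ℝ → ℝ}

lemma intervalIntegral_add_of_odd_of_reflection (hf : Continuous f) (hφ : Continuous φ)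
    (hf_odd : Function.Odd f) (hφ_refl : ∀ u, φ (-u) = 1 - φ u) (t : ℝ) :
    (∫ u in (0 : ℝ)..t, f (u - t) * φ u) + ∫ u in (0 : ℝ)..(-t), f (u + t) * φ u =
      -∫ u in (0 : ℝ)..t, f u := by
  have reflect : ∫ u in (0 : ℝ)..(-t), f (u + t) * φ u =
      ∫ u in (0 : ℝ)..t, (f (u - t) - f (u - t) * φ u) := by
    rw [intervalIntegral.integral_symm, ← neg_zero,
      ← intervalIntegral.integral_comp_neg fun u ↦ f (u + t) * φ u,
      ← intervalIntegral.integral_neg, neg_zero]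
    congr! 2 with u
    rw [hφ_refl, show -u + t = -(u - t) by ring, hf_odd]
    ring
  have hcont : Continuous fun u ↦ f (u - t) * φ u := by fun_prop
  have hcont_sub : Continuous fun u ↦ f (u - t) - f (u - t) * φ u := by fun_prop
  rw [reflect, ← intervalIntegral.integral_add (hcont.intervalIntegrable _ _)
    (hcont_sub.intervalIntegrable _ _)]
  simp only [add_sub_cancel]
  rw [intervalIntegral.integral_comp_sub_right f, zero_sub, sub_self,
    ← intervalIntegral.integral_neg, ← neg_zero, ← intervalIntegral.integral_comp_neg, neg_zero]
  simp only [hf_odd _]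

theorem integral_mul_add_of_odd_of_reflection (hf : Continuous f) (hφ : Continuous φ)
    (hf_odd : Function.Odd f) (hφ_refl : ∀ u, φ (-u) = 1 - φ u)
    (hfi : ∀ s, IntegrableOn (fun x ↦ f x * φ (x + s)) (Ioi 0)) (t : ℝ) :
    ∫ x in Ioi 0, f x * (φ (x + t) + φ (x - t)) =
      (∫ x in (0 : ℝ)..t, f x) + ∫ u in Ioi 0, (f (u + t) + f (u - t)) * φ u := by
  have hcont (s : ℝ) : Continuous fun u ↦ f (u - s) * φ u := by fun_prop
  have hfi_shift (s : ℝ) : IntegrableOn (fun u ↦ f (u - s) * φ u) (Ioi 0) := by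
    refine integrableOn_Ioi_of_continuous (hcont s) (a := 0 + s) ?_ 0
    rw [← integrableOn_Ioi_comp_add_right_iff]
    simpa using hfi s
  have shift (s : ℝ) : ∫ x in Ioi 0, f x * φ (x + s) =
      (∫ u in Ioi 0, f (u - s) * φ u) - ∫ u in (0 : ℝ)..s, f (u - s) * φ u := by
    simpa using integral_Ioi_comp_add_right_eq_sub (hcont s) (hfi_shift s) s
  have hfi_neg : IntegrableOn (fun x ↦ f x * φ (x - t)) (Ioi 0) := hfi (-t)
  have hfi_shift_neg : IntegrableOn (fun u ↦ f (u + t) * φ u) (Ioi 0) := by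
    simpa only [sub_neg_eq_add] using hfi_shift (-t)
  have shift_neg : ∫ x in Ioi 0, f x * φ (x - t) =
      (∫ u in Ioi 0, f (u + t) * φ u) - ∫ u in (0 : ℝ)..(-t), f (u + t) * φ u := by
    simpa only [sub_neg_eq_add, ← sub_eq_add_neg] using shift (-t)
  simp only [mul_add, add_mul]
  rw [integral_add (hfi t) hfi_neg, integral_add hfi_shift_neg (hfi_shift t), shift, shift_neg]
  linarith [intervalIntegral_add_of_odd_of_reflection hf hφ hf_odd hφ_refl t]

end Reflection

section SigmoidMoments

lemma sigmoid_le_exp (x : ℝ) : sigmoid x ≤ exp x := by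
  rw [← neg_neg x, ← sigmoid_mul_rexp_neg]
  exact mul_le_of_le_one_left (exp_nonneg _) (sigmoid_le_one _)

lemma hasSum_sigmoid {x : ℝ} (hx : x < 0) :
    HasSum (fun n : ℕ ↦ (-1) ^ n * exp ((n + 1) * x)) (sigmoid x) := by
  have hgeom := (hasSum_geometric_of_abs_lt_one (r := -exp x)
    (by rwa [abs_neg, abs_exp, exp_lt_one_iff])).mul_right (exp x)
  convert! hgeom using 1
  · ext n
    rw [neg_pow (exp x), ← exp_nat_mul, mul_assoc, ← exp_add, add_one_mul]
  · rw [← neg_neg x, ← sigmoid_mul_rexp_neg, sigmoid_def, neg_neg, sub_neg_eq_add]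

variable {a : ℝ}

lemma integrableOn_pow_mul_sigmoid (ha : 0 < a) (n : ℕ) (s : ℝ) :
    IntegrableOn (fun x ↦ x ^ n * sigmoid (-(a * (x + s)))) (Ioi 0) := by
  have hexp : IntegrableOn (fun x ↦ x ^ n * exp (-a * x)) (Ioi 0) := by
    simpa using integrableOn_rpow_mul_exp_neg_mul_rpow (s := n)
      (neg_one_lt_zero.trans_le n.cast_nonneg) one_pos ha
  refine (hexp.mul_const (exp (-a * s))).mono' (by fun_prop) ?_
  filter_upwards [ae_restrict_mem measurableSet_Ioi] with x hx
  have hx : 0 < x := hx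
  rw [norm_of_nonneg (by positivity [sigmoid_pos (-(a * (x + s)))]), mul_assoc, ← exp_add]
  gcongr
  exact (sigmoid_le_exp _).trans_eq (by ring_nf)

lemma hasSum_mellin_sigmoid (ha : 0 < a) {s : ℂ} (hs : 1 < s.re) :
    HasSum (fun n : ℕ ↦ Complex.Gamma s * (-1) ^ n / ((a * (n + 1) : ℝ) : ℂ) ^ s)
      (mellin (fun u ↦ (sigmoid (-(a * u)) : ℂ)) s) := by
  refine hasSum_mellin (a := fun n : ℕ ↦ (-1) ^ n) (fun n ↦ .inr (by positivity))
    (one_pos.trans hs) (fun u hu ↦ ?_) ?_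
  · have hneg : -(a * u) < 0 := neg_lt_zero.2 (mul_pos ha hu)
    convert! Complex.hasSum_ofReal.2 (hasSum_sigmoid hneg) using 2 with n
    push_cast
    ring_nf
  · have hsum := ((summable_nat_add_iff 1).2 (summable_one_div_nat_rpow.2 hs)).mul_left
      ((a ^ s.re)⁻¹)
    convert! hsum using 2 with n
    rw [mul_rpow ha.le (by positivity)]
    simp [mul_comm]

lemma hasSum_integral_pow_mul_sigmoid (ha : 0 < a) {n : ℕ} (hn : n ≠ 0) :
    HasSum (fun m : ℕ ↦ n.factorial * (-1) ^ m / (a * (m + 1)) ^ (n + 1))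
      (∫ u in Ioi 0, u ^ n * sigmoid (-(a * u))) := by
  have hmellin := hasSum_mellin_sigmoid ha (s := (n + 1 : ℕ)) (by simp [hn, Nat.pos_iff_ne_zero])
  rw [← Complex.hasSum_ofReal]
  convert! hmellin using 1
  · ext m
    rw [Complex.cpow_natCast, Nat.cast_succ, Complex.Gamma_nat_eq_factorial]
    push_cast
    rfl
  · rw [mellin, ← integral_complex_ofReal]
    simp

lemma hasSum_alternating_one_div_nat_pow {k : ℕ} (hk : k ≠ 0) :
    HasSum (fun n : ℕ ↦ (-1) ^ n / ((n : ℝ) + 1) ^ (2 * k))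
      ((-1) ^ (k + 1) * (2 * π) ^ (2 * k) / 2 / (2 * k).factorial *
        ((1 - 2 / 2 ^ (2 * k)) * bernoulli (2 * k))) := by
  have hcos := hasSum_one_div_nat_pow_mul_cos hk (x := 2⁻¹) (by norm_num)
  rw [← bernoulliFun, bernoulliFun_eval_half, ← hasSum_nat_add_iff' 1] at hcos
  convert! hcos.neg using 1
  · ext n
    rw [show 2 * π * ((n + 1 : ℕ) : ℝ) * 2⁻¹ = (n + 1 : ℕ) * π by ring, cos_nat_mul_pi]
    push_cast
    ring
  · simp [hk]
    ring

theorem integral_odd_pow_mul_sigmoid (ha : 0 < a) (k : ℕ) :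
    ∫ u in Ioi 0, u ^ (2 * k + 1) * sigmoid (-(a * u)) =
      (-1) ^ k * (1 - 2 / 2 ^ (2 * (k + 1))) * (2 * π / a) ^ (2 * (k + 1)) *
        bernoulli (2 * (k + 1)) / (4 * (k + 1)) := by
  have hsum := (hasSum_alternating_one_div_nat_pow k.add_one_ne_zero).mul_left
    ((2 * k + 1).factorial / a ^ (2 * (k + 1)))
  refine (hasSum_integral_pow_mul_sigmoid ha (n := 2 * k + 1) (by lia)).unique ?_
  convert! hsum using 1
  · ext n
    rw [div_mul_div_comm, ← mul_pow, mul_add_one 2 k]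
  · rw [show (2 * (k + 1)).factorial = (2 * k + 2) * (2 * k + 1).factorial from
      Nat.factorial_succ _, div_pow]
    push_cast
    field_simp
    ring

end SigmoidMoments

section OddPowers

lemma sum_range_two_mul {M : Type*} [AddCommMonoid M] (c : ℕ → M) (n : ℕ) :
    ∑ m ∈ range (2 * n), c m = ∑ j ∈ range n, (c (2 * j) + c (2 * j + 1)) := by
  induction n with
  | zero => simp
  | succ n ih => rw [mul_add_one, sum_range_succ, sum_range_succ, ih, sum_range_succ, add_assoc]

lemma add_pow_add_sub_pow_of_odd {R : Type*} [CommRing R] (u t : R) (k : ℕ) :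
    (u + t) ^ (2 * k + 1) + (u - t) ^ (2 * k + 1) =
      ∑ j ∈ range (k + 1), 2 * (2 * k + 1).choose (2 * j + 1) * t ^ (2 * (k - j)) *
        u ^ (2 * j + 1) := by
  rw [sub_eq_add_neg, add_pow, add_pow, ← sum_add_distrib,
    show 2 * k + 1 + 1 = 2 * (k + 1) by ring, sum_range_two_mul]
  refine sum_congr rfl fun j hj ↦ ?_
  obtain ⟨i, rfl⟩ := Nat.exists_eq_add_of_le (Nat.lt_succ_iff.1 (Finset.mem_range.1 hj))
  rw [show 2 * (j + i) + 1 - 2 * j = 2 * i + 1 by lia,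
    show 2 * (j + i) + 1 - (2 * j + 1) = 2 * i by lia, Nat.add_sub_cancel_left,
    (odd_two_mul_add_one i).neg_pow, (even_two_mul i).neg_pow]
  ring

end OddPowers

section Kernel

lemma H_eq_sigmoid_add_sigmoid (x t : ℝ) :
    H x t = sigmoid (-(2⁻¹ * (x + t))) + sigmoid (-(2⁻¹ * (x - t))) := by
  simp only [H, sigmoid_def, one_div, neg_neg, inv_mul_eq_div]

lemma integrableOn_pow_mul_H (n : ℕ) (t : ℝ) : IntegrableOn (fun x ↦ x ^ n * H x t) (Ioi 0) := by
  simp only [H_eq_sigmoid_add_sigmoid, mul_add (_ ^ n), sub_eq_add_neg]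
  exact (integrableOn_pow_mul_sigmoid (by norm_num) n t).add
    (integrableOn_pow_mul_sigmoid (by norm_num) n (-t))

lemma integral_odd_pow_mul_H (k : ℕ) (t : ℝ) :
    ∫ x in Ioi 0, x ^ (2 * k + 1) * H x t =
      t ^ (2 * k + 2) / (2 * k + 2) +
        ∑ j ∈ range (k + 1), 2 * (2 * k + 1).choose (2 * j + 1) * t ^ (2 * (k - j)) *
          ∫ u in Ioi 0, u ^ (2 * j + 1) * sigmoid (-(2⁻¹ * u)) := by
  have hfi (n : ℕ) (s : ℝ) := integrableOn_pow_mul_sigmoid (a := 2⁻¹) (by norm_num) n s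
  have hfi_zero (j : ℕ) :
      IntegrableOn (fun u ↦ u ^ (2 * j + 1) * sigmoid (-(2⁻¹ * u))) (Ioi 0) := by
    simpa only [add_zero] using hfi (2 * j + 1) 0
  have hfi_term (j : ℕ) : IntegrableOn (fun u ↦ 2 * (2 * k + 1).choose (2 * j + 1) *
      t ^ (2 * (k - j)) * (u ^ (2 * j + 1) * sigmoid (-(2⁻¹ * u)))) (Ioi 0) :=
    (hfi_zero j).const_mul _
  have reflected := integral_mul_add_of_odd_of_reflection (f := fun x ↦ x ^ (2 * k + 1))
    (φ := fun u ↦ sigmoid (-(2⁻¹ * u))) (by fun_prop) (by fun_prop)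
    (odd_two_mul_add_one k).neg_pow (fun u ↦ by rw [mul_neg, sigmoid_neg]) (hfi _) t
  simp only [H_eq_sigmoid_add_sigmoid, reflected, add_pow_add_sub_pow_of_odd, sum_mul,
    mul_assoc _ (_ ^ (2 * _ + 1)) (sigmoid _)]
  rw [integral_finsetSum _ fun j _ ↦ hfi_term j, integral_pow]
  simp only [integral_const_mul]
  push_cast
  ring_nf

/-- This integral is Mirzakhani's polynomial `F_{2k+1}(t)`. -/
theorem integral_x3_H_general (k : ℕ) (t : ℝ) :
    IntegrableOn (fun x ↦ x ^ (2 * k + 1) * H x t) (Ioi 0) ∧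
    ∫ x in Ioi 0, x ^ (2 * k + 1) * H x t =
      t ^ (2 * k + 2) / (2 * k + 2) +
        ∑ j ∈ range (k + 1), (2 * k + 1).choose (2 * j + 1) * t ^ (2 * (k - j)) *
          ((-1) ^ j * (1 - 2 / 2 ^ (2 * (j + 1))) * (4 * π) ^ (2 * (j + 1)) *
            bernoulli (2 * (j + 1)) / (2 * (j + 1))) := by
  refine ⟨integrableOn_pow_mul_H _ t, (integral_odd_pow_mul_H k t).trans ?_⟩
  congr! 2 with j
  rw [integral_odd_pow_mul_sigmoid (by norm_num), show 2 * π / 2⁻¹ = 4 * π by ring]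
  field_simp
  ring

lemma bernoulli_four : bernoulli 4 = -1 / 30 := by
  rw [bernoulli_eq_bernoulli'_of_ne_one (by norm_num), bernoulli'_four]

end Kernel

theorem integral_x3_H (t : ℝ) :
    IntegrableOn (fun x : ℝ => x ^ 3 * H x t) (Set.Ioi 0) ∧
    ∫ x in Set.Ioi (0 : ℝ), x ^ 3 * H x t =
      t ^ 4 / 4 + 2 * π ^ 2 * t ^ 2 + 28 * π ^ 4 / 15 := by
  refine (integral_x3_H_general 1 t).imp_right fun h ↦ h.trans ?_
  norm_num [sum_range_succ, bernoulli_two, bernoulli_four, Nat.choose]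
  ring
end
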